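/- In the setting of the confined walk and the concentric boxes around x₀ ∈ Γ^N, one has, for N large enough that all objects are defined: Ē(g,g)·(1 − 2·sup_{x∈D}|f_{A₁}(x)|) ≤ 1/Ē_π[H_{A₁}] ≤ Ē(g,g)/π(D)², where D = U^N ∖ A₂ and π(D) = Σ_{x∈D} π(x). -/

import Mathlib

/-!
Write `m = ∑ π u` for the mean entrance time, `𝓔` for the Dirichlet form and `D = U ∖ A₂`.
The proof rests on Green's formula `𝓔(v, k) = -∑ π k L̃v` (`green`), applied to three pairs.

* As `u` vanishes on `A₁` and `L̃u = -1` off `A₁`, `𝓔(u, u) = m`.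
* As `1 - g` vanishes on `A₁`, `-𝓔(u, g) = 𝓔(u, 1 - g) = ∑ π (1 - g)`, which lies between `π(D)`
  and `1` since `0 ≤ g ≤ 1` and `g = 0` on `D`. Cauchy–Schwarz gives `π(D)² ≤ m 𝓔(g, g)`, which is
  the upper bound (and shows `m > 0`).
* As `L̃g = 0` on `A₂ ∖ A₁`, `-𝓔(g, u) = ∑_D π u L̃g`, where `L̃g ≥ 0` on `D` and
  `∑_D π L̃g = 𝓔(g, g)`. With `u ≥ m (1 - s)` on `D`, `s = sup_D |1 - u / m|`, this yields
  `m (1 - s) 𝓔(g, g) ≤ 1`, which is stronger than the lower bound, as `s ≥ 0`.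

These steps are carried out for an abstract finite network in `network_upper` and `network_lower`.
What is specific to the confined walk is that `f > 0` on `U^N` and `π` has mass one, the maximum
principle `0 ≤ g ≤ 1` (`genOp_max_principle`), and `π(D) > 0`, which holds once
`⌊N^{r₂}⌋ < ⌊N^{r₅}⌋`.
-/

open scoped BigOperators Classical
open Metric Set

noncomputable section

def toR (d : ℕ) (x : Fin d → ℤ) : EuclideanSpace ℝ (Fin d) :=
  (WithLp.equiv 2 (Fin d → ℝ)).symm (fun i => (x i : ℝ))

def latAdj (d : ℕ) (x y : Fin d → ℤ) : Prop := ‖toR d x - toR d y‖ = 1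

def wRad (d : ℕ) (a R : ℝ) (z : EuclideanSpace ℝ (Fin d)) : ℝ :=
  if ‖z‖ ≤ a then 1
  else if ‖z‖ ≤ R then (‖z‖ ^ ((2:ℝ) - d) - R ^ ((2:ℝ) - d)) / (a ^ ((2:ℝ) - d) - R ^ ((2:ℝ) - d))
  else 0

def lap (d : ℕ) (h : EuclideanSpace ℝ (Fin d) → ℝ) (z : EuclideanSpace ℝ (Fin d)) : ℝ :=
  ∑ i : Fin d, fderiv ℝ (fun y => fderiv ℝ h y (EuclideanSpace.single i (1:ℝ))) z
    (EuclideanSpace.single i (1:ℝ))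

def hNf (d N : ℕ) (h : EuclideanSpace ℝ (Fin d) → ℝ) (x : Fin d → ℤ) : ℝ :=
  h ((N:ℝ)⁻¹ • toR d x)

def hNsq (d N : ℕ) (h : EuclideanSpace ℝ (Fin d) → ℝ) : ℝ :=
  ∑' x : Fin d → ℤ, (hNf d N h x)^2

def fConf (d N : ℕ) (h : EuclideanSpace ℝ (Fin d) → ℝ) (x : Fin d → ℤ) : ℝ :=
  hNf d N h x / Real.sqrt (hNsq d N h)

def piConf (d N : ℕ) (h : EuclideanSpace ℝ (Fin d) → ℝ) (x : Fin d → ℤ) : ℝ :=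
  (fConf d N h x)^2

def UNf (d N R : ℕ) : Finset (Fin d → ℤ) :=
  (Finset.Icc (fun _ => -((N*R : ℕ) : ℤ)) (fun _ => ((N*R : ℕ) : ℤ))).filter
    (fun x => ‖toR d x‖ < (N:ℝ) * R)

def genOp (d : ℕ) (U : Finset (Fin d → ℤ)) (f g : (Fin d → ℤ) → ℝ) (x : Fin d → ℤ) : ℝ :=
  (1/(2*(d:ℝ))) * ∑ y ∈ U.filter (fun y => latAdj d y x), (f y / f x) * (g y - g x)

def dirForm (d : ℕ) (U : Finset (Fin d → ℤ)) (f g : (Fin d → ℤ) → ℝ) : ℝ :=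
  (1/2) * ∑ x ∈ U, ∑ y ∈ U.filter (fun y => latAdj d x y),
    (f x * f y / (2*(d:ℝ))) * (g x - g y)^2

def boxF (d : ℕ) (x₀ : Fin d → ℤ) (r : ℕ) : Finset (Fin d → ℤ) :=
  Finset.Icc (fun i => x₀ i - (r:ℤ)) (fun i => x₀ i + (r:ℤ))

def Abx (d : ℕ) (x₀ : Fin d → ℤ) (N : ℕ) (r : ℝ) : Finset (Fin d → ℤ) :=
  boxF d x₀ ⌊(N:ℝ) ^ r⌋₊

def A6b (d : ℕ) (x₀ : Fin d → ℤ) (N : ℕ) (δ : ℝ) : Finset (Fin d → ℤ) :=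
  boxF d x₀ ⌊δ * N / 100⌋₊

def KNl (d N : ℕ) (S : Set (EuclideanSpace ℝ (Fin d))) : Set (Fin d → ℤ) :=
  {x | ∃ y ∈ S, ∀ i, |(x i : ℝ) - N * y i| ≤ 1}

def GammaN (d N : ℕ) (δ : ℝ) (K : Set (EuclideanSpace ℝ (Fin d))) : Set (Fin d → ℤ) :=
  {x | x ∉ KNl d N (cthickening (δ/2) K) ∧ ∃ y ∈ KNl d N (cthickening (δ/2) K), latAdj d x y}

def capZ (d : ℕ) (A : Finset (Fin d → ℤ)) : ℝ :=
  sInf { E : ℝ | ∃ φ : (Fin d → ℤ) → ℝ, (Function.support φ).Finite ∧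
    (∀ x ∈ A, 1 ≤ φ x) ∧
    E = (1/2) * ∑' p : (Fin d → ℤ) × (Fin d → ℤ),
      (if latAdj d p.1 p.2 then (1/(2*(d:ℝ))) * (φ p.2 - φ p.1)^2 else 0) }

def genEntry (d : ℕ) (U : Finset (Fin d → ℤ)) (f : (Fin d → ℤ) → ℝ) (x y : Fin d → ℤ) : ℝ :=
  (if latAdj d y x then (1/(2*(d:ℝ))) * (f y / f x) else 0)
  - (if x = y then (1/(2*(d:ℝ))) * ∑ z ∈ U.filter (fun z => latAdj d z x), f z / f x else 0)

def killedMat (d : ℕ) (U D : Finset (Fin d → ℤ)) (f : (Fin d → ℤ) → ℝ) :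
    Matrix {x // x ∈ D} {x // x ∈ D} ℝ :=
  fun x y => genEntry d U f x.1 y.1

def genD (d : ℕ) (U D : Finset (Fin d → ℤ)) (f g : (Fin d → ℤ) → ℝ) (x : Fin d → ℤ) : ℝ :=
  (1/(2*(d:ℝ))) * ((∑ y ∈ D.filter (fun y => latAdj d y x), (f y / f x) * g y)
    - (∑ z ∈ U.filter (fun z => latAdj d z x), (f z / f x)) * g x)

def nbrs (d : ℕ) (w : Fin d → ℤ) : Finset (Fin d → ℤ) :=
  (Finset.Icc (fun i => w i - 1) (fun i => w i + 1)).filter (fun z => latAdj d z w)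

def outBd (d : ℕ) (A : Finset (Fin d → ℤ)) : Finset (Fin d → ℤ) :=
  (A.biUnion (nbrs d)).filter (fun z => z ∉ A)

def discLap (d : ℕ) (g : (Fin d → ℤ) → ℝ) (x : Fin d → ℤ) : ℝ :=
  (1/(2*(d:ℝ))) * ∑ i : Fin d,
    ((g (x + Pi.single i 1) - g x) + (g (x - Pi.single i 1) - g x))

def discEnergy (d : ℕ) (φ : (Fin d → ℤ) → ℝ) : ℝ :=
  (1/2) * ∑' p : (Fin d → ℤ) × (Fin d → ℤ),
    (if latAdj d p.1 p.2 then (1/(2*(d:ℝ))) * (φ p.2 - φ p.1)^2 else 0)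

def dirEnergy (d : ℕ) (u : EuclideanSpace ℝ (Fin d) → ℝ) : ℝ :=
  (1/2) * ∫ z, ‖gradient u z‖^2

def relCap (d : ℕ) (R : ℝ) (A : Set (EuclideanSpace ℝ (Fin d))) : ℝ :=
  sInf { E : ℝ | ∃ u : EuclideanSpace ℝ (Fin d) → ℝ,
    (∃ C : NNReal, LipschitzWith C u) ∧ HasCompactSupport u ∧
    tsupport u ⊆ ball (0 : EuclideanSpace ℝ (Fin d)) R ∧
    (∀ z ∈ A, 1 ≤ u z) ∧ E = dirEnergy d u }

/-! ### Finite networks -/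

section Network

variable {α : Type*}

/-- The unnormalised generator `∑_{y ∈ U} c(x, y) (v y - v x)` of a network with conductances `c`;
for the confined walk it equals `π(x) (L̃v)(x)`. -/
def netLap (U : Finset α) (c : α → α → ℝ) (v : α → ℝ) (x : α) : ℝ :=
  ∑ y ∈ U, c x y * (v y - v x)

/-- The bilinear Dirichlet form of a network. -/
def netForm (U : Finset α) (c : α → α → ℝ) (v k : α → ℝ) : ℝ :=
  (1/2) * ∑ x ∈ U, ∑ y ∈ U, c x y * ((v x - v y) * (k x - k y))

lemma netForm_comm (U : Finset α) (c : α → α → ℝ) (v k : α → ℝ) :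
    netForm U c v k = netForm U c k v := by
  unfold netForm
  congr 1
  refine Finset.sum_congr rfl fun x _ => Finset.sum_congr rfl fun y _ => ?_
  ring

lemma netForm_self_nonneg {U : Finset α} {c : α → α → ℝ} (hc : ∀ x ∈ U, ∀ y ∈ U, 0 ≤ c x y)
    (v : α → ℝ) : 0 ≤ netForm U c v v := by
  unfold netForm
  refine mul_nonneg (by norm_num) (Finset.sum_nonneg fun x hx => Finset.sum_nonneg fun y hy => ?_)
  exact mul_nonneg (hc x hx y hy) (mul_self_nonneg _)

lemma green (U : Finset α) (c : α → α → ℝ) (hsymm : ∀ x y, c x y = c y x) (v k : α → ℝ) :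
    netForm U c v k = - ∑ x ∈ U, k x * netLap U c v x := by
  have h1 : ∑ x ∈ U, k x * netLap U c v x
      = ∑ x ∈ U, ∑ y ∈ U, c x y * (v y - v x) * k x := by
    refine Finset.sum_congr rfl fun x _ => ?_
    rw [netLap, Finset.mul_sum]
    exact Finset.sum_congr rfl fun y _ => by ring
  have h2 : ∑ x ∈ U, k x * netLap U c v x
      = ∑ x ∈ U, ∑ y ∈ U, c x y * (v x - v y) * k y := by
    rw [h1, Finset.sum_comm]
    refine Finset.sum_congr rfl fun x _ => Finset.sum_congr rfl fun y _ => ?_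
    rw [hsymm]
  have h3 : ∑ x ∈ U, ∑ y ∈ U, c x y * ((v x - v y) * (k x - k y))
      = -(∑ x ∈ U, ∑ y ∈ U, c x y * (v y - v x) * k x)
        - ∑ x ∈ U, ∑ y ∈ U, c x y * (v x - v y) * k y := by
    simp only [← Finset.sum_neg_distrib, ← Finset.sum_sub_distrib]
    refine Finset.sum_congr rfl fun x _ => Finset.sum_congr rfl fun y _ => ?_
    ring
  rw [netForm, h3, ← h1, ← h2]
  ring

lemma netForm_cauchy_schwarz {U : Finset α} {c : α → α → ℝ}
    (hc : ∀ x ∈ U, ∀ y ∈ U, 0 ≤ c x y) (v k : α → ℝ) :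
    netForm U c v k ^ 2 ≤ netForm U c v v * netForm U c k k := by
  have key : ∀ t : ℝ, 0 ≤ netForm U c v v * (t * t) + (2 * netForm U c v k) * t
      + netForm U c k k := by
    intro t
    have h := netForm_self_nonneg hc (fun x => t * v x + k x)
    have e : netForm U c (fun x => t * v x + k x) (fun x => t * v x + k x)
        = netForm U c v v * (t * t) + (2 * netForm U c v k) * t + netForm U c k k := by
      simp only [netForm, Finset.mul_sum, Finset.sum_mul, ← Finset.sum_add_distrib]
      refine Finset.sum_congr rfl fun x _ => Finset.sum_congr rfl fun y _ => ?_
      ring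
    rwa [e] at h
  have := discrim_le_zero key
  unfold discrim at this
  nlinarith

variable [DecidableEq α] {U A₁ A₂ : Finset α} {c : α → α → ℝ} {p g u : α → ℝ}

lemma netForm_hit_self (hsymm : ∀ x y, c x y = c y x)
    (hu : ∀ x ∈ A₁, u x = 0) (hLu : ∀ x ∈ U, x ∉ A₁ → netLap U c u x = -p x) :
    netForm U c u u = ∑ x ∈ U, p x * u x := by
  rw [green U c hsymm, ← Finset.sum_neg_distrib]
  refine Finset.sum_congr rfl fun x hx => ?_
  by_cases h : x ∈ A₁
  · simp [hu x h]
  · rw [hLu x hx h]; ring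

lemma netForm_hit_pot (hsymm : ∀ x y, c x y = c y x)
    (hg : ∀ x ∈ A₁, g x = 1) (hLu : ∀ x ∈ U, x ∉ A₁ → netLap U c u x = -p x) :
    -netForm U c u g = ∑ x ∈ U, p x * (1 - g x) := by
  have h1 : netForm U c u (fun x => 1 - g x) = -netForm U c u g := by
    simp only [netForm, Finset.mul_sum, ← Finset.sum_neg_distrib]
    refine Finset.sum_congr rfl fun x _ => Finset.sum_congr rfl fun y _ => ?_
    ring
  rw [← h1, green U c hsymm, ← Finset.sum_neg_distrib]
  refine Finset.sum_congr rfl fun x hx => ?_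
  by_cases h : x ∈ A₁
  · simp [hg x h]
  · rw [hLu x hx h]; ring

/-- The upper bound in product form; it follows from Cauchy–Schwarz for `u` and `g`. -/
lemma network_upper (hsymm : ∀ x y, c x y = c y x) (hc : ∀ x ∈ U, ∀ y ∈ U, 0 ≤ c x y)
    (hp : ∀ x ∈ U, 0 ≤ p x)
    (hg1 : ∀ x ∈ A₁, g x = 1) (hg0 : ∀ x ∈ U, x ∉ A₂ → g x = 0) (hgle : ∀ x ∈ U, g x ≤ 1)
    (hu : ∀ x ∈ A₁, u x = 0) (hLu : ∀ x ∈ U, x ∉ A₁ → netLap U c u x = -p x) :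
    (∑ x ∈ U \ A₂, p x) ^ 2 ≤ (∑ x ∈ U, p x * u x) * netForm U c g g := by
  have h1 : ∑ x ∈ U \ A₂, p x ≤ -netForm U c u g := by
    rw [netForm_hit_pot hsymm hg1 hLu]
    calc ∑ x ∈ U \ A₂, p x = ∑ x ∈ U \ A₂, p x * (1 - g x) := by
          refine Finset.sum_congr rfl fun x hx => ?_
          rw [Finset.mem_sdiff] at hx
          simp [hg0 x hx.1 hx.2]
      _ ≤ ∑ x ∈ U, p x * (1 - g x) :=
          Finset.sum_le_sum_of_subset_of_nonneg Finset.sdiff_subset fun x hx _ =>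
            mul_nonneg (hp x hx) (sub_nonneg.2 (hgle x hx))
  have h0 : 0 ≤ ∑ x ∈ U \ A₂, p x :=
    Finset.sum_nonneg fun x hx => hp x (Finset.mem_sdiff.1 hx).1
  rw [← netForm_hit_self hsymm hu hLu]
  calc (∑ x ∈ U \ A₂, p x) ^ 2 ≤ (-netForm U c u g) ^ 2 := by gcongr
    _ = netForm U c u g ^ 2 := by ring
    _ ≤ _ := netForm_cauchy_schwarz hc u g

/-- A lower bound `b` for `u` off `A₂` gives `b 𝓔(g, g) ≤ 1`: the flux `∑_D L g` out of `A₂` is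
`𝓔(g, g)`, and pairing it with `u` gives `∑ p (1 - g) ≤ 1`. -/
lemma network_lower (hsymm : ∀ x y, c x y = c y x) (hc : ∀ x ∈ U, ∀ y ∈ U, 0 ≤ c x y)
    (hp : ∀ x ∈ U, 0 ≤ p x) (hp1 : ∑ x ∈ U, p x = 1)
    (hg1 : ∀ x ∈ A₁, g x = 1) (hg0 : ∀ x ∈ U, x ∉ A₂ → g x = 0) (hgnn : ∀ x ∈ U, 0 ≤ g x)
    (hLg : ∀ x ∈ A₂, x ∉ A₁ → netLap U c g x = 0)
    (hu : ∀ x ∈ A₁, u x = 0) (hLu : ∀ x ∈ U, x ∉ A₁ → netLap U c u x = -p x)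
    (b : ℝ) (hb : ∀ x ∈ U, x ∉ A₂ → b ≤ u x) :
    b * netForm U c g g ≤ 1 := by
  -- Testing against `g - 1` instead of `g` moves the mass of `L g` from `A₁` to `U ∖ A₂`.
  have hflux : netForm U c g g = ∑ x ∈ U \ A₂, netLap U c g x := by
    have h1 : netForm U c g (fun x => g x - 1) = netForm U c g g := by
      simp only [netForm]; congr 1
      refine Finset.sum_congr rfl fun x _ => Finset.sum_congr rfl fun y _ => ?_
      ring
    rw [← h1, green U c hsymm, ← Finset.sum_neg_distrib, eq_comm]
    refine (Finset.sum_congr rfl fun x hx => ?_).trans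
      (Finset.sum_subset Finset.sdiff_subset fun x hx hx' => ?_)
    · rw [Finset.mem_sdiff] at hx
      rw [hg0 x hx.1 hx.2]; ring
    · have hx2 : x ∈ A₂ := by
        by_contra h; exact hx' (Finset.mem_sdiff.2 ⟨hx, h⟩)
      by_cases h : x ∈ A₁
      · simp [hg1 x h]
      · simp [hLg x hx2 h]
  have hpair : -netForm U c u g = ∑ x ∈ U \ A₂, u x * netLap U c g x := by
    rw [netForm_comm, green U c hsymm, neg_neg, eq_comm]
    refine Finset.sum_subset Finset.sdiff_subset fun x hx hx' => ?_
    have hx2 : x ∈ A₂ := by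
      by_contra h; exact hx' (Finset.mem_sdiff.2 ⟨hx, h⟩)
    by_cases h : x ∈ A₁
    · simp [hu x h]
    · simp [hLg x hx2 h]
  calc b * netForm U c g g = ∑ x ∈ U \ A₂, b * netLap U c g x := by rw [hflux, Finset.mul_sum]
    _ ≤ ∑ x ∈ U \ A₂, u x * netLap U c g x := by
        refine Finset.sum_le_sum fun x hx => ?_
        rw [Finset.mem_sdiff] at hx
        refine mul_le_mul_of_nonneg_right (hb x hx.1 hx.2) (Finset.sum_nonneg fun y hy => ?_)
        rw [hg0 x hx.1 hx.2, sub_zero]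
        exact mul_nonneg (hc x hx.1 y hy) (hgnn y hy)
    _ = ∑ x ∈ U, p x * (1 - g x) := by rw [← hpair, netForm_hit_pot hsymm hg1 hLu]
    _ ≤ ∑ x ∈ U, p x :=
        Finset.sum_le_sum fun x hx => by nlinarith [mul_nonneg (hp x hx) (hgnn x hx)]
    _ = 1 := hp1

end Network

/-! ### The confined walk -/

/-- The conductances `f(x) f(y) / (2d)` on nearest-neighbour pairs. -/
def cond8 (d : ℕ) (f : (Fin d → ℤ) → ℝ) (x y : Fin d → ℤ) : ℝ :=
  if latAdj d x y then f x * f y / (2*(d:ℝ)) else 0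

lemma latAdj_comm (d : ℕ) (x y : Fin d → ℤ) : latAdj d x y ↔ latAdj d y x := by
  unfold latAdj; rw [norm_sub_rev]

lemma cond8_symm (d : ℕ) (f : (Fin d → ℤ) → ℝ) (x y : Fin d → ℤ) :
    cond8 d f x y = cond8 d f y x := by
  unfold cond8; simp only [latAdj_comm d x y, mul_comm (f x)]

lemma dirForm_eq_netForm (d : ℕ) (U : Finset (Fin d → ℤ)) (f g : (Fin d → ℤ) → ℝ) :
    dirForm d U f g = netForm U (cond8 d f) g g := by
  unfold dirForm netForm cond8
  congr 1
  refine Finset.sum_congr rfl fun x _ => ?_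
  rw [Finset.sum_filter]
  refine Finset.sum_congr rfl fun y _ => ?_
  split_ifs <;> ring

lemma sq_mul_genOp (d : ℕ) (U : Finset (Fin d → ℤ)) (f g : (Fin d → ℤ) → ℝ) (x : Fin d → ℤ)
    (hx : f x ≠ 0) : f x ^ 2 * genOp d U f g x = netLap U (cond8 d f) g x := by
  unfold genOp netLap cond8
  rw [Finset.sum_filter, Finset.mul_sum, Finset.mul_sum]
  refine Finset.sum_congr rfl fun y _ => ?_
  simp only [latAdj_comm d x y]
  split_ifs
  · by_cases hd : (d:ℝ) = 0
    · simp [hd]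
    · field_simp
  · simp

lemma latAdj_add_single (d : ℕ) (i : Fin d) (x : Fin d → ℤ) :
    latAdj d (x + Pi.single i 1) x := by
  unfold latAdj
  have : toR d (x + Pi.single i 1) - toR d x = EuclideanSpace.single i (1:ℝ) := by
    ext j
    by_cases hj : j = i
    · subst hj; simp [toR]
    · simp [toR, hj]
  rw [this]; simp

/-- The maximum principle on `A`, for an `A` from which one can step inside `U` in direction `i`.
No connectedness is needed: a maximiser with the largest `i`-th coordinate has the neighbour
`x + eᵢ`, at which the value is strictly smaller. -/
lemma genOp_max_principle (d : ℕ) (i : Fin d) (U A : Finset (Fin d → ℤ))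
    (f g : (Fin d → ℤ) → ℝ) (hf : ∀ x ∈ U, 0 < f x)
    (hstep : ∀ x ∈ A, x + Pi.single i 1 ∈ U) (M : ℝ) (hM : ∀ x ∈ U, x ∉ A → g x ≤ M)
    (hL : ∀ x ∈ A, genOp d U f g x = 0) : ∀ x ∈ U, g x ≤ M := by
  by_contra hcon
  push Not at hcon
  obtain ⟨x₁, hx₁, hgt⟩ := hcon
  obtain ⟨z, hz, hzmax⟩ := U.exists_max_image g ⟨x₁, hx₁⟩
  obtain ⟨x, hx, hxmax⟩ := (U.filter fun y => g y = g z).exists_max_image (fun y => y i)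
    ⟨z, by simp [hz]⟩
  rw [Finset.mem_filter] at hx
  have hxM : M < g x := by rw [hx.2]; exact hgt.trans_le (hzmax x₁ hx₁)
  have hxA : x ∈ A := by
    by_contra h; exact absurd (hM x hx.1 h) (not_le.2 hxM)
  set y := x + Pi.single i 1 with hy
  have hyU : y ∈ U := hstep x hxA
  have hylt : g y < g x := by
    refine lt_of_le_of_ne (hx.2 ▸ hzmax y hyU) fun h => ?_
    have := hxmax y (by simp [hyU, h, hx.2])
    simp [hy] at this
  have hd : 0 < (d:ℝ) := by exact_mod_cast i.pos
  have hneg : ∑ y ∈ U.filter (fun y => latAdj d y x), (f y / f x) * (g y - g x) < 0 := by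
    refine Finset.sum_neg' (fun w hw => ?_) ⟨y, ?_, ?_⟩
    · have hwU := (Finset.mem_filter.1 hw).1
      exact mul_nonpos_of_nonneg_of_nonpos (div_pos (hf w hwU) (hf x hx.1)).le
        (sub_nonpos.2 (hx.2 ▸ hzmax w hwU))
    · exact Finset.mem_filter.2 ⟨hyU, latAdj_add_single d i x⟩
    · exact mul_neg_of_pos_of_neg (div_pos (hf y hyU) (hf x hx.1)) (sub_neg.2 hylt)
  have h0 := hL x hxA
  unfold genOp at h0
  have : 0 < 1/(2*(d:ℝ)) := by positivity
  nlinarith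

lemma genOp_neg (d : ℕ) (U : Finset (Fin d → ℤ)) (f g : (Fin d → ℤ) → ℝ) (x : Fin d → ℤ) :
    genOp d U f (fun y => -g y) x = -genOp d U f g x := by
  unfold genOp
  rw [← mul_neg, ← Finset.sum_neg_distrib]
  congr 1
  exact Finset.sum_congr rfl fun y _ => by ring

lemma wRad_pos (d : ℕ) (hd : 3 ≤ d) (a R : ℝ) (ha : 0 < a) (z : EuclideanSpace ℝ (Fin d))
    (hz : ‖z‖ < R) : 0 < wRad d a R z := by
  unfold wRad
  have hd' : (2:ℝ) - d < 0 := by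
    have : (3:ℝ) ≤ d := by exact_mod_cast hd
    linarith
  split_ifs with h1 h2
  · exact one_pos
  · push Not at h1
    have := Real.rpow_lt_rpow_of_neg (ha.trans h1) hz hd'
    have := Real.rpow_lt_rpow_of_neg ha (h1.trans hz) hd'
    exact div_pos (by linarith) (by linarith)
  · exact absurd hz.le h2

lemma mem_UNf (d N R : ℕ) (x : Fin d → ℤ) : x ∈ UNf d N R ↔ ‖toR d x‖ < (N:ℝ) * R := by
  unfold UNf
  rw [Finset.mem_filter, and_iff_right_iff_imp]
  intro hx
  have : ∀ i, |x i| ≤ ((N*R : ℕ) : ℤ) := by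
    intro i
    have h1 : ‖(toR d x) i‖ ≤ ‖toR d x‖ := PiLp.norm_apply_le _ i
    have h2 : ‖(toR d x) i‖ = |(x i : ℝ)| := by simp [toR]
    have h3 : |(x i : ℝ)| ≤ (N:ℝ) * R := by linarith
    exact_mod_cast h3
  rw [Finset.mem_Icc]
  exact ⟨fun i => (abs_le.1 (this i)).1, fun i => (abs_le.1 (this i)).2⟩

lemma mem_boxF (d : ℕ) (x₀ x : Fin d → ℤ) (r : ℕ) :
    x ∈ boxF d x₀ r ↔ ∀ i, x₀ i - r ≤ x i ∧ x i ≤ x₀ i + r := by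
  unfold boxF
  rw [Finset.mem_Icc, Pi.le_def, Pi.le_def, ← forall_and]

lemma boxF_mono (d : ℕ) (x₀ : Fin d → ℤ) {r s : ℕ} (hrs : r ≤ s) :
    boxF d x₀ r ⊆ boxF d x₀ s := by
  intro x hx
  rw [mem_boxF] at hx ⊢
  intro i
  have := hx i
  constructor <;> omega

lemma eventually_floor_lt {a b : ℝ} (ha : 0 < a) (hab : a < b) :
    ∃ N₀ : ℕ, ∀ N : ℕ, N₀ ≤ N → ⌊(N:ℝ) ^ a⌋₊ < ⌊(N:ℝ) ^ b⌋₊ := by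
  have h1 : Filter.Tendsto (fun N : ℕ => (N:ℝ) ^ (b - a)) Filter.atTop Filter.atTop :=
    (tendsto_rpow_atTop (sub_pos.2 hab)).comp tendsto_natCast_atTop_atTop
  obtain ⟨N₁, hN₁⟩ := Filter.eventually_atTop.1 (h1.eventually_ge_atTop 2)
  refine ⟨max N₁ 1, fun N hN => ?_⟩
  have hN1 : (1:ℝ) ≤ N := by exact_mod_cast (le_max_right _ _).trans hN
  have h2 := hN₁ N ((le_max_left _ _).trans hN)
  have h3 : (1:ℝ) ≤ (N:ℝ) ^ a := Real.one_le_rpow hN1 ha.le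
  have h4 : (N:ℝ) ^ b = (N:ℝ) ^ a * (N:ℝ) ^ (b - a) := by
    rw [← Real.rpow_add (by linarith)]; congr 1; ring
  have h5 : (N:ℝ) ^ a + 1 ≤ (N:ℝ) ^ b := by rw [h4]; nlinarith
  calc ⌊(N:ℝ) ^ a⌋₊ < ⌊(N:ℝ) ^ a⌋₊ + 1 := Nat.lt_succ_self _
    _ = ⌊(N:ℝ) ^ a + 1⌋₊ := (Nat.floor_add_one (by linarith)).symm
    _ ≤ _ := Nat.floor_le_floor h5

theorem statement8 (d : ℕ) (hd : 3 ≤ d) (δ : ℝ) (hδ : δ ∈ Set.Ioo (0:ℝ) 1)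
    (R : ℕ) (hR : 400 < R)
    (K : Set (EuclideanSpace ℝ (Fin d))) (hK : IsCompact K)
    (h0K : (0 : EuclideanSpace ℝ (Fin d)) ∈ K)
    (hKR : K ⊆ closedBall 0 ((R:ℝ)/100))
    (h : EuclideanSpace ℝ (Fin d) → ℝ) (hcont : Continuous h)
    (hrange : ∀ z, h z ∈ Set.Icc (0:ℝ) 1)
    (hone : ∀ z ∈ cthickening (2*δ) K, h z = 1)
    (hzero : ∀ z ∉ ball (0 : EuclideanSpace ℝ (Fin d)) (R:ℝ), h z = 0)
    (hsmooth : ContDiffOn ℝ (⊤ : ℕ∞) h (closedBall (0 : EuclideanSpace ℝ (Fin d)) (R:ℝ)))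
    (hharm : ∀ z ∈ ball (0 : EuclideanSpace ℝ (Fin d)) (R:ℝ) \ closedBall (0 : EuclideanSpace ℝ (Fin d)) ((R:ℝ)/2),
      lap d h z = 0)
    (c₁ c₂ c₃ : ℝ) (hc₁ : 0 < c₁) (hc₂ : 0 < c₂) (hc₃ : 0 < c₃)
    (hw1 : ∀ z, c₁ * wRad d δ R z ≤ h z)
    (hw2 : ∀ z, h z ≤ c₂ * wRad d ((R:ℝ)/50) R z)
    (hmono : ∀ z₁ z₂ : EuclideanSpace ℝ (Fin d), ‖z₁‖ ≤ ‖z₂‖ → ‖z₂‖ ≤ (R:ℝ) → c₃ * h z₂ ≤ h z₁)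
    (r₁ r₂ r₃ r₄ r₅ : ℝ)
    (hr : 0 < r₁ ∧ r₁ < r₂ ∧ r₂ < r₃ ∧ r₃ < r₄ ∧ r₄ < r₅ ∧ r₅ < 1) :
    ∃ N₀ : ℕ, ∀ N, N₀ ≤ N → ∀ x₀ ∈ GammaN d N δ K,
      Abx d x₀ N r₅ ⊆ A6b d x₀ N δ → A6b d x₀ N δ ⊆ UNf d N R →
      (∀ x ∈ A6b d x₀ N δ, hNf d N h x = 1) →
      ∀ g : (Fin d → ℤ) → ℝ,
        (∀ x ∈ Abx d x₀ N r₁, g x = 1) →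
        (∀ x ∈ UNf d N R, x ∉ Abx d x₀ N r₂ → g x = 0) →
        (∀ x ∈ Abx d x₀ N r₂, x ∉ Abx d x₀ N r₁ → genOp d (UNf d N R) (fConf d N h) g x = 0) →
      ∀ uA : (Fin d → ℤ) → ℝ,
        (∀ x ∈ Abx d x₀ N r₁, uA x = 0) →
        (∀ x ∈ UNf d N R, x ∉ Abx d x₀ N r₁ → genOp d (UNf d N R) (fConf d N h) uA x = -1) →
        dirForm d (UNf d N R) (fConf d N h) g *
            (1 - 2 * sSup ((fun x => |1 - uA x / (∑ y ∈ UNf d N R, piConf d N h y * uA y)|) ''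
              ((UNf d N R \ Abx d x₀ N r₂ : Finset (Fin d → ℤ)) : Set (Fin d → ℤ))))
          ≤ 1 / (∑ y ∈ UNf d N R, piConf d N h y * uA y) ∧
        1 / (∑ y ∈ UNf d N R, piConf d N h y * uA y)
          ≤ dirForm d (UNf d N R) (fConf d N h) g / (∑ x ∈ UNf d N R \ Abx d x₀ N r₂, piConf d N h x)^2 := by
  obtain ⟨hr1, hr12, hr23, hr34, hr45, -⟩ := hr
  obtain ⟨N₁, hN₁⟩ := eventually_floor_lt (hr1.trans hr12) (hr23.trans (hr34.trans hr45))
  refine ⟨max N₁ 1, fun N hN x₀ _ h56 h6U _ g hg1 hg0 hLg u hu hLu => ?_⟩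
  have hfloor := hN₁ N ((le_max_left _ _).trans hN)
  have hNpos : (0:ℝ) < N := by exact_mod_cast (le_max_right N₁ 1).trans hN
  have h5U : Abx d x₀ N r₅ ⊆ UNf d N R := h56.trans h6U
  have hA25 : Abx d x₀ N r₂ ⊆ Abx d x₀ N r₅ := boxF_mono d x₀ hfloor.le
  have hi : 0 < d := by omega
  set i : Fin d := ⟨0, hi⟩ with hidef
  have hscale : ∀ x : Fin d → ℤ, ‖(N:ℝ)⁻¹ • toR d x‖ < R ↔ x ∈ UNf d N R := by
    intro x
    rw [mem_UNf, norm_smul, norm_inv, Real.norm_of_nonneg hNpos.le, inv_mul_lt_iff₀ hNpos]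
  have hhpos : ∀ x ∈ UNf d N R, 0 < hNf d N h x := fun x hx =>
    (mul_pos hc₁ (wRad_pos d hd δ R hδ.1 _ ((hscale x).2 hx))).trans_le (hw1 _)
  have hhzero : ∀ x ∉ UNf d N R, hNf d N h x = 0 := by
    intro x hx
    refine hzero _ fun hmem => hx ((hscale x).1 ?_)
    simpa using hmem
  have hsq : hNsq d N h = ∑ x ∈ UNf d N R, hNf d N h x ^ 2 :=
    tsum_eq_sum fun x hx => by rw [hhzero x hx]; norm_num
  have hx₀ : x₀ ∈ UNf d N R := by
    refine h5U ((mem_boxF _ _ _ _).2 fun j => ?_)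
    constructor <;> omega
  have hsqpos : 0 < hNsq d N h := by
    rw [hsq]
    exact Finset.sum_pos (fun x hx => pow_pos (hhpos x hx) 2) ⟨x₀, hx₀⟩
  have hf : ∀ x ∈ UNf d N R, 0 < fConf d N h x := fun x hx =>
    div_pos (hhpos x hx) (Real.sqrt_pos.2 hsqpos)
  have hp : ∀ x ∈ UNf d N R, 0 < piConf d N h x := fun x hx => pow_pos (hf x hx) 2
  have hp1 : ∑ x ∈ UNf d N R, piConf d N h x = 1 := by
    simp only [piConf, fConf, div_pow, Real.sq_sqrt hsqpos.le]
    rw [← Finset.sum_div, ← hsq]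
    exact div_self (ne_of_gt hsqpos)
  -- The centre of a face of `A₅` lies in `D`.
  have hD : (UNf d N R \ Abx d x₀ N r₂).Nonempty := by
    refine ⟨x₀ + Pi.single i (⌊(N:ℝ) ^ r₅⌋₊ : ℤ), Finset.mem_sdiff.2 ⟨h5U ?_, fun hmem => ?_⟩⟩
    · refine (mem_boxF _ _ _ _).2 fun j => ?_
      by_cases hj : j = i
      · subst hj; simp only [Pi.add_apply, Pi.single_eq_same]; constructor <;> omega
      · simp only [Pi.add_apply, Pi.single_eq_of_ne hj]; constructor <;> omega
    · have := ((mem_boxF _ _ _ _).1 hmem i).2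
      simp only [Pi.add_apply, Pi.single_eq_same] at this
      omega
  -- `A₅` leaves room for one step out of `A₂`, as the maximum principle requires.
  have hstep : ∀ x ∈ Abx d x₀ N r₂ \ Abx d x₀ N r₁, x + Pi.single i 1 ∈ UNf d N R := by
    intro x hx
    refine h5U ((mem_boxF _ _ _ _).2 fun j => ?_)
    have := (mem_boxF _ _ _ _).1 (Finset.mem_sdiff.1 hx).1 j
    by_cases hj : j = i
    · rw [hj] at this ⊢; simp only [Pi.add_apply, Pi.single_eq_same]; constructor <;> omega
    · simp only [Pi.add_apply, Pi.single_eq_of_ne hj]; constructor <;> omega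
  have hbd : ∀ x ∈ UNf d N R, x ∉ Abx d x₀ N r₂ \ Abx d x₀ N r₁ → g x = 1 ∨ g x = 0 := by
    intro x hx hx'
    by_cases h1 : x ∈ Abx d x₀ N r₁
    · exact Or.inl (hg1 x h1)
    · exact Or.inr (hg0 x hx fun h2 => hx' (Finset.mem_sdiff.2 ⟨h2, h1⟩))
  have hLg' : ∀ x ∈ Abx d x₀ N r₂ \ Abx d x₀ N r₁,
      genOp d (UNf d N R) (fConf d N h) g x = 0 := fun x hx =>
    hLg x (Finset.mem_sdiff.1 hx).1 (Finset.mem_sdiff.1 hx).2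
  have hgle : ∀ x ∈ UNf d N R, g x ≤ 1 :=
    genOp_max_principle d i _ _ _ g hf hstep 1
      (fun x hx hx' => by rcases hbd x hx hx' with h | h <;> rw [h]; norm_num) hLg'
  have hgnn : ∀ x ∈ UNf d N R, 0 ≤ g x := by
    intro x hx
    have := genOp_max_principle d i _ _ _ (fun y => -g y) hf hstep 0
      (fun x hx hx' => by rcases hbd x hx hx' with h | h <;> rw [h] <;> norm_num)
      (fun x hx => by rw [genOp_neg, hLg' x hx, neg_zero]) x hx
    linarith
  have hsymm := cond8_symm d (fConf d N h)
  have hc : ∀ x ∈ UNf d N R, ∀ y ∈ UNf d N R, 0 ≤ cond8 d (fConf d N h) x y := by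
    intro x hx y hy
    have := hf x hx
    have := hf y hy
    unfold cond8
    split_ifs <;> positivity
  have hLgN : ∀ x ∈ Abx d x₀ N r₂, x ∉ Abx d x₀ N r₁ →
      netLap (UNf d N R) (cond8 d (fConf d N h)) g x = 0 := by
    intro x hx hx'
    rw [← sq_mul_genOp _ _ _ _ _ (hf x (h5U (hA25 hx))).ne', hLg x hx hx', mul_zero]
  have hLuN : ∀ x ∈ UNf d N R, x ∉ Abx d x₀ N r₁ →
      netLap (UNf d N R) (cond8 d (fConf d N h)) u x = -piConf d N h x := by
    intro x hx hx'
    rw [← sq_mul_genOp _ _ _ _ _ (hf x hx).ne', hLu x hx hx', piConf]; ring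
  have hupper := network_upper hsymm hc (fun x hx => (hp x hx).le) hg1 hg0 hgle hu hLuN
  have hmnn := netForm_self_nonneg hc u
  rw [netForm_hit_self hsymm hu hLuN] at hmnn
  have hEnn := netForm_self_nonneg hc g
  have hlower := network_lower hsymm hc (fun x hx => (hp x hx).le) hp1 hg1 hg0 hgnn hLgN
    hu hLuN
  rw [← dirForm_eq_netForm] at hupper hlower hEnn
  have hDpos : 0 < ∑ x ∈ UNf d N R \ Abx d x₀ N r₂, piConf d N h x :=
    Finset.sum_pos (fun x hx => hp x (Finset.mem_sdiff.1 hx).1) hD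
  set m := ∑ y ∈ UNf d N R, piConf d N h y * u y with hm
  set E := dirForm d (UNf d N R) (fConf d N h) g
  set q := ∑ x ∈ UNf d N R \ Abx d x₀ N r₂, piConf d N h x
  have hq2 : 0 < q ^ 2 := by positivity
  have hmpos : 0 < m := by
    rcases hmnn.eq_or_lt with h0 | h0
    · rw [← h0, zero_mul] at hupper; linarith
    · exact h0
  constructor
  · set s := sSup ((fun x => |1 - u x / m|) ''
      ((UNf d N R \ Abx d x₀ N r₂ : Finset (Fin d → ℤ)) : Set (Fin d → ℤ))) with hs
    have hle : ∀ x ∈ UNf d N R, x ∉ Abx d x₀ N r₂ → |1 - u x / m| ≤ s := fun x hx hx' =>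
      le_csSup ((Finset.finite_toSet _).image _).bddAbove
        ⟨x, Finset.mem_coe.2 (Finset.mem_sdiff.2 ⟨hx, hx'⟩), rfl⟩
    have hs0 : 0 ≤ s := by
      obtain ⟨x, hx⟩ := hD
      rw [Finset.mem_sdiff] at hx
      exact (abs_nonneg _).trans (hle x hx.1 hx.2)
    have key := hlower (m * (1 - s)) fun x hx hx' => by
      have h1 := (abs_le.1 (hle x hx hx')).2
      have h2 : 1 - s ≤ u x / m := by linarith
      rw [le_div_iff₀ hmpos] at h2
      linarith
    rw [le_div_iff₀ hmpos]
    nlinarith [mul_nonneg (mul_nonneg hEnn hs0) hmpos.le]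
  · rw [div_le_div_iff₀ hmpos hq2]
    linarith
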